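/- arXiv:1801.06334 — 3 statements merged into one kernel-verified Lean document; each statement's English description precedes it below -/
import Mathlib

section
/- For every n ∈ ℕ, the number of dissection diagrams of degree n equals (1/(2n+1))·binomial(3n, n); equivalently, (2n+1) times the number of dissection diagrams of degree n equals binomial(3n, n). -/
/-- Two chords of the `(n+1)`-gon (unordered pairs of vertices) cross:
writing the first one as `{a,b}` and the second as `{c,d}`, they cross when
`a < c < b < d` or `c < a < d < b`. -/
def Crosses {m : ℕ} (c₁ c₂ : Sym2 (Fin m)) : Prop :=
  ∃ a b c d : Fin m, c₁ = s(a, b) ∧ c₂ = s(c, d) ∧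
    ((a < c ∧ c < b ∧ b < d) ∨ (c < a ∧ a < d ∧ d < b))

/-- A dissection diagram of degree `n`: a set of `n` chords of the `(n+1)`-gon
(2-element subsets of the vertex set `{0,…,n}`), pairwise non-crossing, whose
associated graph on the vertices is acyclic. -/
def IsDissection {n : ℕ} (C : Finset (Sym2 (Fin (n + 1)))) : Prop :=
  C.card = n ∧ (∀ e ∈ C, ¬ e.IsDiag) ∧
    (∀ e₁ ∈ C, ∀ e₂ ∈ C, ¬ Crosses e₁ e₂) ∧
    (SimpleGraph.fromEdgeSet (↑C : Set (Sym2 (Fin (n + 1))))).IsAcyclic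

/-- The number of dissection diagrams of degree `n`. -/
noncomputable def numDissection (n : ℕ) : ℕ :=
  Nat.card {C : Finset (Sym2 (Fin (n + 1))) // IsDissection C}

/-!
A dissection diagram is a noncrossing spanning tree on the linearly ordered vertices `0 < ⋯ < n`.

Let `G` be a noncrossing tree on `[a, b]` with `a < b`, and let `v` be the last neighbour of `a`.
No edge passes over `v`, so `G` is the union of a tree on `[a, v]` containing the edge `av` and a
tree on `[v, b]`. Deleting the edge `av` from the former leaves noncrossing trees on two intervals
`[a, i]` and `[j, v]` with `i`, `j` consecutive. Hence the generating function `T` of noncrossing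
trees, by number of edges, satisfies `T = 1 + X T³`.

If `T = 1 + X T ^ (p + 1)`, then `T ^ (r + 1) = T ^ r + X T ^ (p + 1 + r)`, and this recursion in
`n` and `r`, together with Pascal's rule, gives the coefficient of `X ^ n` in `T ^ r` as
`r / ((p + 1) n + r) * choose ((p + 1) n + r) n`.
-/

section Graph

variable {V W : Type*} {G H : SimpleGraph V}

theorem reachable_map_of_forall_adj {K : SimpleGraph W} (f : V → W)
    (hf : ∀ x y, G.Adj x y → K.Reachable (f x) (f y)) {x y : V} (h : G.Reachable x y) :
    K.Reachable (f x) (f y) := by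
  obtain ⟨p⟩ := h
  induction p with
  | nil => rfl
  | cons hadj _ ih => exact (hf _ _ hadj).trans ih

theorem mem_of_reachable {s : Set V} (hs : ∀ x y, G.Adj x y → x ∈ s → y ∈ s) {x y : V}
    (h : G.Reachable x y) (hx : x ∈ s) : y ∈ s := by
  obtain ⟨p⟩ := h
  induction p with
  | nil => exact hx
  | cons hadj _ ih => exact ih (hs _ _ hadj hx)

theorem reachable_or_reachable_of_reachable_sup_edge {u v x : V}
    (h : (G ⊔ SimpleGraph.edge u v).Reachable u x) : G.Reachable u x ∨ G.Reachable v x := by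
  refine mem_of_reachable (s := {z | G.Reachable u z ∨ G.Reachable v z}) ?_ h (.inl .rfl)
  rintro z w (hzw | hzw) hz
  · exact hz.imp (·.trans hzw.reachable) (·.trans hzw.reachable)
  · obtain ⟨⟨rfl, rfl⟩ | ⟨rfl, rfl⟩, -⟩ := (SimpleGraph.edge_adj ..).1 hzw
    exacts [.inr .rfl, .inl .rfl]

theorem isBridge_sup_of_support_inter_subset {m x y : V} (hxy : G.Adj x y)
    (hb : G.IsBridge s(x, y)) (hGH : G.support ∩ H.support ⊆ {m}) :
    (G ⊔ H).IsBridge s(x, y) := by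
  classical
  -- Collapsing everything outside `G` to `m` retracts `G ⊔ H` onto `G`.
  let f (z : V) : V := if z ∈ G.support then z else m
  have f_of_mem {z : V} (hz : z ∈ G.support) : f z = z := if_pos hz
  have f_of_mem' {z : V} (hz : z ∈ H.support) : f z = m := by
    by_cases hzG : z ∈ G.support
    · exact (f_of_mem hzG).trans (hGH ⟨hzG, hz⟩)
    · exact if_neg hzG
  intro hr
  suffices (G.deleteEdges {s(x, y)}).Reachable (f x) (f y) by
    rw [f_of_mem hxy.mem_support_left, f_of_mem hxy.mem_support_right] at this
    exact hb this
  refine reachable_map_of_forall_adj f (fun z w hzw => ?_) hr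
  obtain ⟨hG | hH, hne⟩ := SimpleGraph.deleteEdges_adj.1 hzw
  · rw [f_of_mem hG.mem_support_left, f_of_mem hG.mem_support_right]
    exact (SimpleGraph.deleteEdges_adj.2 ⟨hG, hne⟩).reachable
  · rw [f_of_mem' hH.mem_support_left, f_of_mem' hH.mem_support_right]

theorem isAcyclic_sup_of_support_inter_subset {m : V} (hG : G.IsAcyclic) (hH : H.IsAcyclic)
    (hGH : G.support ∩ H.support ⊆ {m}) : (G ⊔ H).IsAcyclic := by
  rw [SimpleGraph.isAcyclic_iff_forall_adj_isBridge] at *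
  rintro x y (hxy | hxy)
  · exact isBridge_sup_of_support_inter_subset hxy (hG hxy) hGH
  · rw [sup_comm]
    exact isBridge_sup_of_support_inter_subset hxy (hH hxy) (Set.inter_comm _ _ ▸ hGH)

theorem spanningCoe_induce_adj {s : Set V} {x y : V} :
    (G.induce s).spanningCoe.Adj x y ↔ x ∈ s ∧ y ∈ s ∧ G.Adj x y := by
  simp [← and_assoc, and_comm]

theorem spanningCoe_induce_sup_eq_left {s : Set V} (hG : G.support ⊆ s)
    (hH : (H.support ∩ s).Subsingleton) : ((G ⊔ H).induce s).spanningCoe = G := by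
  ext x y
  rw [spanningCoe_induce_adj]
  constructor
  · rintro ⟨hx, hy, hxy | hxy⟩
    · exact hxy
    · exact absurd (hH ⟨hxy.mem_support_left, hx⟩ ⟨hxy.mem_support_right, hy⟩) hxy.ne
  · exact fun hxy => ⟨hG hxy.mem_support_left, hG hxy.mem_support_right, .inl hxy⟩

theorem spanningCoe_induce_sup_spanningCoe_induce {s t : Set V}
    (h : ∀ x y, G.Adj x y → x ∈ s ∧ y ∈ s ∨ x ∈ t ∧ y ∈ t) :
    (G.induce s).spanningCoe ⊔ (G.induce t).spanningCoe = G := by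
  refine le_antisymm (sup_le (G.spanningCoe_induce_le s) (G.spanningCoe_induce_le t)) ?_
  exact fun x y hxy => (h x y hxy).imp
    (fun hs => spanningCoe_induce_adj.2 ⟨hs.1, hs.2, hxy⟩)
    (fun ht => spanningCoe_induce_adj.2 ⟨ht.1, ht.2, hxy⟩)

theorem eq_and_eq_of_sup_eq_sup {G' H' : SimpleGraph V} {s t : Set V}
    (hst : (s ∩ t).Subsingleton) (hG : G.support ⊆ s) (hG' : G'.support ⊆ s)
    (hH : H.support ⊆ t) (hH' : H'.support ⊆ t) (h : G ⊔ H = G' ⊔ H') : G = G' ∧ H = H' := by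
  constructor
  · rw [← spanningCoe_induce_sup_eq_left hG (hst.anti fun _ hx => ⟨hx.2, hH hx.1⟩), h,
      spanningCoe_induce_sup_eq_left hG' (hst.anti fun _ hx => ⟨hx.2, hH' hx.1⟩)]
  · rw [← spanningCoe_induce_sup_eq_left hH (hst.anti fun _ hx => ⟨hG hx.1, hx.2⟩), sup_comm, h,
      sup_comm, spanningCoe_induce_sup_eq_left hH' (hst.anti fun _ hx => ⟨hG' hx.1, hx.2⟩)]

end Graph

theorem card_eq_sum_card_mul_card {ι β γ δ : Type*} {s : Finset ι} {A : ι → Finset β}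
    {B : ι → Finset γ} {t : Finset δ} (f : β → γ → δ)
    (hf : ∀ i ∈ s, ∀ x ∈ A i, ∀ y ∈ B i, f x y ∈ t)
    (hinj : ∀ i ∈ s, ∀ x ∈ A i, ∀ y ∈ B i, ∀ i' ∈ s, ∀ x' ∈ A i', ∀ y' ∈ B i',
      f x y = f x' y' → i = i' ∧ x = x' ∧ y = y')
    (hsurj : ∀ z ∈ t, ∃ i ∈ s, ∃ x ∈ A i, ∃ y ∈ B i, f x y = z) :
    t.card = ∑ i ∈ s, (A i).card * (B i).card := by
  have hcard : (s.sigma fun i => A i ×ˢ B i).card = t.card := by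
    refine Finset.card_nbij (fun p => f p.2.1 p.2.2) ?_ ?_ ?_
    · rintro ⟨i, x, y⟩ hp
      obtain ⟨hi, hx, hy⟩ : i ∈ s ∧ x ∈ A i ∧ y ∈ B i := by simpa using hp
      exact hf i hi x hx y hy
    · rintro ⟨i, x, y⟩ hp ⟨i', x', y'⟩ hp' h
      obtain ⟨hi, hx, hy⟩ : i ∈ s ∧ x ∈ A i ∧ y ∈ B i := by simpa using hp
      obtain ⟨hi', hx', hy'⟩ : i' ∈ s ∧ x' ∈ A i' ∧ y' ∈ B i' := by simpa using hp'
      obtain ⟨rfl, rfl, rfl⟩ := hinj i hi x hx y hy i' hi' x' hx' y' hy' h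
      rfl
    · intro z hz
      obtain ⟨i, hi, x, hx, y, hy, rfl⟩ := hsurj z hz
      exact ⟨⟨i, x, y⟩, by simp [hi, hx, hy], rfl⟩
  rw [← hcard, Finset.card_sigma]
  simp only [Finset.card_product]

section LinearOrder

variable {α : Type*} [LinearOrder α]

/-- No two edges of `G` cross when the vertices are placed on a circle in increasing order. Since
`G.Adj` is symmetric, it suffices to forbid an edge `zw` with `x < z < y < w` for some edge
`xy`. -/
def IsNoncrossing (G : SimpleGraph α) : Prop :=
  ∀ ⦃x y z w : α⦄, G.Adj x y → G.Adj z w → x < z → z < y → w ≤ y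

/-- `G` is a noncrossing spanning tree of the interval `[a, b]`, where `a ≤ b`. It is encoded as a
graph on all of `α` that is isolated outside `[a, b]`, so that trees on different intervals can be
joined by `⊔`. -/
structure IsNoncrossingTree (G : SimpleGraph α) (a b : α) : Prop where
  isAcyclic : G.IsAcyclic
  isNoncrossing : IsNoncrossing G
  support_subset : G.support ⊆ Set.Icc a b
  reachable : ∀ x ∈ Set.Icc a b, G.Reachable a x

variable {G L R : SimpleGraph α} {a b i j v l u x y : α}

namespace IsNoncrossing

theorem anti {H : SimpleGraph α} (hG : IsNoncrossing G) (h : H ≤ G) : IsNoncrossing H :=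
  fun _ _ _ _ hxy hzw => hG (h hxy) (h hzw)

theorem sup_of_support_le (hL : IsNoncrossing L) (hR : IsNoncrossing R)
    (hLR : ∀ x ∈ L.support, ∀ y ∈ R.support, x ≤ y) : IsNoncrossing (L ⊔ R) := by
  rintro x y z w (hxy | hxy) (hzw | hzw) hxz hzy
  · exact hL hxy hzw hxz hzy
  · exact absurd hzy (hLR _ hxy.mem_support_right _ hzw.mem_support_left).not_gt
  · exact absurd hxz (hLR _ hzw.mem_support_left _ hxy.mem_support_left).not_gt
  · exact hR hxy hzw hxz hzy

theorem sup_edge (hG : IsNoncrossing G) (hGab : G.support ⊆ Set.Icc a b) :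
    IsNoncrossing (G ⊔ SimpleGraph.edge a b) := by
  rintro x y z w (hxy | hxy) (hzw | hzw) hxz hzy
  · exact hG hxy hzw hxz hzy
  · have hx := hGab hxy.mem_support_left
    have hy := hGab hxy.mem_support_right
    obtain ⟨⟨rfl, rfl⟩ | ⟨rfl, rfl⟩, -⟩ := (SimpleGraph.edge_adj ..).1 hzw
    exacts [absurd hx.1 hxz.not_ge, absurd hy.2 hzy.not_ge]
  · have hz := hGab hzw.mem_support_left
    have hw := hGab hzw.mem_support_right
    obtain ⟨⟨rfl, rfl⟩ | ⟨rfl, rfl⟩, -⟩ := (SimpleGraph.edge_adj ..).1 hxy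
    exacts [hw.2, absurd hz.2 hxz.not_ge]
  · grind

theorem reachable_of_mem_Ioo (hG : IsNoncrossing G) (hxy : G.Adj x y) (hi : i ∈ Set.Ioo x y)
    (hj : j ∉ Set.Ioo x y) (hij : G.Reachable i j) : G.Reachable i x := by
  by_contra hix
  have hiy : ¬ G.Reachable i y := fun h => hix (h.trans hxy.symm.reachable)
  suffices j ∈ {z | z ∈ Set.Ioo x y ∧ G.Reachable i z} from hj this.1
  refine mem_of_reachable (fun z w hzw hz => ?_) hij ⟨hi, .rfl⟩
  have hw : G.Reachable i w := hz.2.trans hzw.reachable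
  have hwx : w ≠ x := fun h => hix (h ▸ hw)
  have hwy : w ≠ y := fun h => hiy (h ▸ hw)
  have hwy' : w ≤ y := hG hxy hzw hz.1.1 hz.1.2
  have hxw : x ≤ w := not_lt.1 fun h => (hG hzw.symm hxy h hz.1.1).not_gt hz.1.2
  exact ⟨⟨hxw.lt_of_ne' hwx, hwy'.lt_of_ne hwy⟩, hw⟩

end IsNoncrossing

theorem reachable_clamp
    (hG : ∀ x y, G.Adj x y → x < y → y ≤ l ∨ u ≤ x ∨ l ≤ x ∧ y ≤ u) (h : G.Reachable x y) :
    (G.induce (Set.Icc l u)).spanningCoe.Reachable (max l (min x u)) (max l (min y u)) := by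
  refine reachable_map_of_forall_adj (fun z => max l (min z u)) (fun x y hxy => ?_) h
  wlog hlt : x < y generalizing x y
  · exact (this y x hxy.symm (hxy.ne'.lt_of_le (not_lt.1 hlt))).symm
  obtain hyl | hux | ⟨hlx, hyu⟩ := hG x y hxy hlt
  · rw [max_eq_left ((min_le_left ..).trans hyl),
      max_eq_left ((min_le_left ..).trans (hlt.le.trans hyl))]
  · rw [min_eq_right hux, min_eq_right (hux.trans hlt.le)]
  · rw [min_eq_left hyu, min_eq_left (hlt.le.trans hyu), max_eq_right hlx,
      max_eq_right (hlx.trans hlt.le)]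
    have hadj : (G.induce (Set.Icc l u)).spanningCoe.Adj x y :=
      spanningCoe_induce_adj.2 ⟨⟨hlx, hlt.le.trans hyu⟩, ⟨hlx.trans hlt.le, hyu⟩, hxy⟩
    exact hadj.reachable

theorem isNoncrossingTree_spanningCoe_induce (hlu : l ≤ u) (hacyc : G.IsAcyclic)
    (hnc : IsNoncrossing G) (hG : ∀ x y, G.Adj x y → x < y → y ≤ l ∨ u ≤ x ∨ l ≤ x ∧ y ≤ u)
    (hreach : ∀ x ∈ Set.Icc l u, G.Reachable l x) :
    IsNoncrossingTree (G.induce (Set.Icc l u)).spanningCoe l u where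
  isAcyclic := hacyc.anti (G.spanningCoe_induce_le _)
  isNoncrossing := hnc.anti (G.spanningCoe_induce_le _)
  support_subset x hx := by
    obtain ⟨y, hxy⟩ := hx
    exact (spanningCoe_induce_adj.1 hxy).1
  reachable x hx := by
    simpa [hlu, hx.1, hx.2] using reachable_clamp hG (hreach x hx)

theorem exists_sup_eq_of_forall_adj (hai : a ≤ i) (hij : i ≤ j) (hjb : j ≤ b)
    (hacyc : G.IsAcyclic) (hnc : IsNoncrossing G) (hsupp : G.support ⊆ Set.Icc a b)
    (hsplit : ∀ x y, G.Adj x y → x < y → y ≤ i ∨ j ≤ x)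
    (hleft : ∀ x ∈ Set.Icc a i, G.Reachable a x) (hright : ∀ x ∈ Set.Icc j b, G.Reachable j x) :
    ∃ L R, IsNoncrossingTree L a i ∧ IsNoncrossingTree R j b ∧ L ⊔ R = G := by
  have hmem : ∀ x y, G.Adj x y → (a ≤ x ∧ x ≤ b) ∧ a ≤ y ∧ y ≤ b := fun _ _ h =>
    ⟨hsupp h.mem_support_left, hsupp h.mem_support_right⟩
  refine ⟨(G.induce (Set.Icc a i)).spanningCoe, (G.induce (Set.Icc j b)).spanningCoe,
    isNoncrossingTree_spanningCoe_induce hai hacyc hnc ?_ hleft,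
    isNoncrossingTree_spanningCoe_induce hjb hacyc hnc ?_ hright,
    spanningCoe_induce_sup_spanningCoe_induce ?_⟩
  · grind
  · grind
  · intro x y hxy
    have hne := hxy.ne
    have hsplit' := hsplit y x hxy.symm
    grind

theorem exists_sup_eq_of_not_reachable [Finite α] (hab : a ≤ b) (hacyc : G.IsAcyclic)
    (hnc : IsNoncrossing G) (hsupp : G.support ⊆ Set.Icc a b) (hGab : ¬ G.Reachable a b)
    (hreach : ∀ x ∈ Set.Icc a b, G.Reachable a x ∨ G.Reachable b x) :
    ∃ i j, a ≤ i ∧ i ⋖ j ∧ j ≤ b ∧ ∃ L R, IsNoncrossingTree L a i ∧ IsNoncrossingTree R j b ∧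
      L ⊔ R = G := by
  obtain ⟨j, ⟨⟨haj, hjb⟩, hbj⟩, hmin⟩ : ∃ j, (j ∈ Set.Icc a b ∧ G.Reachable b j) ∧
      ∀ x, (x ∈ Set.Icc a b ∧ G.Reachable b x) → j ≤ x :=
    Set.exists_min_image {x | x ∈ Set.Icc a b ∧ G.Reachable b x} id (Set.toFinite _)
      ⟨b, ⟨hab, le_rfl⟩, .rfl⟩
  obtain ⟨i, hai, hij⟩ : ∃ i, a ≤ i ∧ i ⋖ j :=
    exists_le_covBy_of_lt (haj.lt_of_ne fun h => hGab (h ▸ hbj.symm))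
  have hnot : ∀ x, G.Reachable a x → ¬ G.Reachable b x := fun x hax hbx =>
    hGab (hax.trans hbx.symm)
  have hleft : ∀ x ∈ Set.Icc a i, G.Reachable a x := fun x hx =>
    have hxj : x < j := hx.2.trans_lt hij.lt
    have hxab : x ∈ Set.Icc a b := ⟨hx.1, hxj.le.trans hjb⟩
    (hreach x hxab).resolve_right fun h => (hmin x ⟨hxab, h⟩).not_gt hxj
  -- An edge over the gap between `i` and `j` would enclose `j` and cut it off from `b`.
  have hsplit : ∀ x y, G.Adj x y → x < y → y ≤ i ∨ j ≤ x := by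
    intro x y hxy _
    by_contra! hiyxj
    have hax : G.Reachable a x :=
      hleft x ⟨(hsupp hxy.mem_support_left).1, hij.le_of_lt hiyxj.2⟩
    have hjy : j < y := (hij.ge_of_gt hiyxj.1).lt_of_ne fun h =>
      hnot y (hax.trans hxy.reachable) (h ▸ hbj)
    have hjx : G.Reachable j x := hnc.reachable_of_mem_Ioo hxy ⟨hiyxj.2, hjy⟩
      (fun h => h.2.not_ge (hsupp hxy.mem_support_right).2) hbj.symm
    exact hnot x hax (hbj.trans hjx)
  have hright : ∀ x ∈ Set.Icc j b, G.Reachable b x := fun x hx =>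
    (hreach x ⟨haj.trans hx.1, hx.2⟩).resolve_left fun h => by
      refine (hij.lt.trans_le hx.1).not_ge (mem_of_reachable (s := Set.Iic i) ?_ h hai)
      intro y z hyz hy
      obtain hlt | hgt := hyz.ne.lt_or_gt
      · exact (hsplit y z hyz hlt).resolve_right (hij.lt.trans_le' hy).not_ge
      · exact hgt.le.trans hy
  exact ⟨i, j, hai, hij, hjb, exists_sup_eq_of_forall_adj hai hij.le hjb hacyc hnc hsupp hsplit
    hleft fun x hx => hbj.symm.trans (hright x hx)⟩

namespace IsNoncrossingTree

theorem sup (hL : IsNoncrossingTree L a v) (hR : IsNoncrossingTree R v b) (hav : a ≤ v)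
    (hvb : v ≤ b) : IsNoncrossingTree (L ⊔ R) a b where
  isAcyclic := isAcyclic_sup_of_support_inter_subset (m := v) hL.isAcyclic hR.isAcyclic
    fun _ hx => le_antisymm (hL.support_subset hx.1).2 (hR.support_subset hx.2).1
  isNoncrossing := hL.isNoncrossing.sup_of_support_le hR.isNoncrossing
    fun _ hx _ hy => (hL.support_subset hx).2.trans (hR.support_subset hy).1
  support_subset := by
    rintro x ⟨y, hxy | hxy⟩
    · exact Set.Icc_subset_Icc_right hvb (hL.support_subset hxy.mem_support_left)
    · exact Set.Icc_subset_Icc_left hav (hR.support_subset hxy.mem_support_left)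
  reachable x hx := by
    obtain hxv | hvx := le_total x v
    · exact (hL.reachable x ⟨hx.1, hxv⟩).mono le_sup_left
    · exact ((hL.reachable v ⟨hav, le_rfl⟩).mono le_sup_left).trans
        ((hR.reachable x ⟨hvx, hx.2⟩).mono le_sup_right)

theorem le_of_reachable_sup (hL : IsNoncrossingTree L a i) (hR : IsNoncrossingTree R j b)
    (hij : i < j) (h : (L ⊔ R).Reachable x y) (hx : x ≤ i) : y ≤ i := by
  refine mem_of_reachable (s := Set.Iic i) ?_ h hx
  rintro z w (hzw | hzw) hz
  · exact (hL.support_subset hzw.mem_support_right).2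
  · exact absurd hz (hij.trans_le (hR.support_subset hzw.mem_support_left).1).not_ge

theorem sup_sup_edge (hL : IsNoncrossingTree L a i) (hR : IsNoncrossingTree R j b)
    (hij : i ⋖ j) (hai : a ≤ i) (hjb : j ≤ b) :
    IsNoncrossingTree (L ⊔ R ⊔ SimpleGraph.edge a b) a b := by
  have hib : i < b := hij.lt.trans_le hjb
  have hLR : ∀ x ∈ L.support, ∀ y ∈ R.support, x < y := fun x hx y hy =>
    ((hL.support_subset hx).2.trans_lt hij.lt).trans_le (hR.support_subset hy).1
  have hsupp : (L ⊔ R).support ⊆ Set.Icc a b := by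
    rintro x ⟨y, hxy | hxy⟩
    · exact Set.Icc_subset_Icc_right (hij.le.trans hjb) (hL.support_subset hxy.mem_support_left)
    · exact Set.Icc_subset_Icc_left (hai.trans hij.le) (hR.support_subset hxy.mem_support_left)
  refine ⟨?_, ?_, ?_, ?_⟩
  · have hacyc : (L ⊔ R).IsAcyclic :=
      isAcyclic_sup_of_support_inter_subset (m := i) hL.isAcyclic hR.isAcyclic
        fun x hx => absurd (hLR x hx.1 x hx.2) (lt_irrefl x)
    exact hacyc.sup_edge_of_not_reachable
      fun h => hib.not_ge (hL.le_of_reachable_sup hR hij.lt h hai)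
  · exact (hL.isNoncrossing.sup_of_support_le hR.isNoncrossing
      fun x hx y hy => (hLR x hx y hy).le).sup_edge hsupp
  · rintro x ⟨y, hxy | hxy⟩
    · exact hsupp hxy.mem_support_left
    · obtain ⟨⟨rfl, rfl⟩ | ⟨rfl, rfl⟩, -⟩ := (SimpleGraph.edge_adj ..).1 hxy
      exacts [⟨le_rfl, hai.trans hib.le⟩, ⟨hai.trans hib.le, le_rfl⟩]
  · intro x hx
    have hL_le : L ≤ L ⊔ R ⊔ SimpleGraph.edge a b := le_sup_left.trans le_sup_left
    have hR_le : R ≤ L ⊔ R ⊔ SimpleGraph.edge a b := le_sup_right.trans le_sup_left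
    have hadj : (L ⊔ R ⊔ SimpleGraph.edge a b).Adj a b :=
      .inr ((SimpleGraph.edge_adj ..).2 ⟨.inl ⟨rfl, rfl⟩, (hai.trans_lt hib).ne⟩)
    obtain hxi | hix := le_or_gt x i
    · exact (hL.reachable x ⟨hx.1, hxi⟩).mono hL_le
    · exact (hadj.reachable.trans ((hR.reachable b ⟨hjb, le_rfl⟩).mono hR_le).symm).trans
        ((hR.reachable x ⟨hij.ge_of_gt hix, hx.2⟩).mono hR_le)

theorem exists_sup_eq [Finite α] (hT : IsNoncrossingTree G a b) (hab : a < b) :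
    ∃ v ∈ Set.Ioc a b, ∃ L R, IsNoncrossingTree L a v ∧ L.Adj a v ∧ IsNoncrossingTree R v b ∧
      L ⊔ R = G := by
  obtain ⟨v, hav, hmax⟩ : ∃ v, G.Adj a v ∧ ∀ x, G.Adj a x → x ≤ v :=
    Set.exists_max_image (G.neighborSet a) id (Set.toFinite _)
      (SimpleGraph.mem_support_of_reachable hab.ne (hT.reachable b ⟨hab.le, le_rfl⟩))
  have hv : v ∈ Set.Icc a b := hT.support_subset hav.mem_support_right
  have hltv : a < v := hv.1.lt_of_ne hav.ne
  have hsplit : ∀ x y, G.Adj x y → x < y → y ≤ v ∨ v ≤ x := by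
    intro x y hxy _
    by_contra! hvxy
    obtain rfl | hax := (hT.support_subset hxy.mem_support_left).1.eq_or_lt
    · exact (hmax y hxy).not_gt hvxy.1
    · exact (hT.isNoncrossing hav hxy hax hvxy.2).not_gt hvxy.1
  obtain ⟨L, R, hL, hR, rfl⟩ := exists_sup_eq_of_forall_adj hv.1 le_rfl hv.2 hT.isAcyclic
    hT.isNoncrossing hT.support_subset hsplit (fun x hx => hT.reachable x ⟨hx.1, hx.2.trans hv.2⟩)
    fun x hx => hav.symm.reachable.trans (hT.reachable x ⟨hv.1.trans hx.1, hx.2⟩)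
  refine ⟨v, ⟨hltv, hv.2⟩, L, R, hL, hav.resolve_right fun h => ?_, hR, rfl⟩
  exact hltv.not_ge (hR.support_subset h.mem_support_left).1

theorem le_of_sup_adj (hL : IsNoncrossingTree L a v) (hR : IsNoncrossingTree R v b) (hav : a < v)
    (h : (L ⊔ R).Adj a x) : x ≤ v := by
  obtain h | h := h
  · exact (hL.support_subset h.mem_support_right).2
  · exact absurd (hR.support_subset h.mem_support_left).1 hav.not_ge

theorem sup_inj {L' R' : SimpleGraph α} {v' : α} (hL : IsNoncrossingTree L a v) (hLv : L.Adj a v)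
    (hR : IsNoncrossingTree R v b) (hL' : IsNoncrossingTree L' a v') (hLv' : L'.Adj a v')
    (hR' : IsNoncrossingTree R' v' b) (h : L ⊔ R = L' ⊔ R') : v = v' ∧ L = L' ∧ R = R' := by
  have hav : a < v := (hL.support_subset hLv.mem_support_right).1.lt_of_ne hLv.ne
  have hav' : a < v' := (hL'.support_subset hLv'.mem_support_right).1.lt_of_ne hLv'.ne
  obtain rfl : v = v' := le_antisymm (hL'.le_of_sup_adj hR' hav' (h ▸ .inl hLv))
    (hL.le_of_sup_adj hR hav (h ▸ .inl hLv'))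
  refine ⟨rfl, eq_and_eq_of_sup_eq_sup ?_ hL.support_subset hL'.support_subset hR.support_subset
    hR'.support_subset h⟩
  intro x hx y hy
  exact (hx.1.2.antisymm hx.2.1).trans (hy.1.2.antisymm hy.2.1).symm

theorem exists_sup_sup_edge_eq [Finite α] (hT : IsNoncrossingTree G a b) (hadj : G.Adj a b) :
    ∃ i j, a ≤ i ∧ i ⋖ j ∧ j ≤ b ∧ ∃ L R, IsNoncrossingTree L a i ∧ IsNoncrossingTree R j b ∧
      L ⊔ R ⊔ SimpleGraph.edge a b = G := by
  have hab : a ≤ b := (hT.support_subset hadj.mem_support_left).2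
  have hle : G \ SimpleGraph.edge a b ≤ G := sdiff_le
  have hrestore : G \ SimpleGraph.edge a b ⊔ SimpleGraph.edge a b = G :=
    sdiff_sup_cancel ((SimpleGraph.edge_le_iff G).2 (.inr hadj))
  obtain ⟨i, j, hai, hij, hjb, L, R, hL, hR, hLR⟩ := exists_sup_eq_of_not_reachable hab
    (hT.isAcyclic.anti hle) (hT.isNoncrossing.anti hle)
    ((SimpleGraph.support_mono hle).trans hT.support_subset)
    (SimpleGraph.isAcyclic_iff_forall_adj_isBridge.1 hT.isAcyclic hadj)
    fun x hx => reachable_or_reachable_of_reachable_sup_edge (hrestore.symm ▸ hT.reachable x hx)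
  exact ⟨i, j, hai, hij, hjb, L, R, hL, hR, hLR ▸ hrestore⟩

theorem le_of_sup_eq_sup {L' R' : SimpleGraph α} {i' : α} (hL : IsNoncrossingTree L a i)
    (hR : IsNoncrossingTree R j b) (hij : i < j) (hai : a ≤ i) (hL' : IsNoncrossingTree L' a i')
    (hai' : a ≤ i') (h : L ⊔ R = L' ⊔ R') : i' ≤ i :=
  hL.le_of_reachable_sup hR hij (h ▸ (hL'.reachable i' ⟨hai', le_rfl⟩).mono le_sup_left) hai

theorem sup_sup_edge_inj {L' R' : SimpleGraph α} {i' j' : α} (hL : IsNoncrossingTree L a i)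
    (hai : a ≤ i) (hij : i ⋖ j) (hjb : j ≤ b) (hR : IsNoncrossingTree R j b)
    (hai' : a ≤ i') (hij' : i' ⋖ j') (hjb' : j' ≤ b) (hL' : IsNoncrossingTree L' a i')
    (hR' : IsNoncrossingTree R' j' b)
    (h : L ⊔ R ⊔ SimpleGraph.edge a b = L' ⊔ R' ⊔ SimpleGraph.edge a b) :
    j = j' ∧ L = L' ∧ R = R' := by
  have hnadj : ¬ (L ⊔ R).Adj a b := fun h =>
    (hij.lt.trans_le hjb).not_ge (hL.le_of_reachable_sup hR hij.lt h.reachable hai)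
  have hnadj' : ¬ (L' ⊔ R').Adj a b := fun h =>
    (hij'.lt.trans_le hjb').not_ge (hL'.le_of_reachable_sup hR' hij'.lt h.reachable hai')
  have hLR : L ⊔ R = L' ⊔ R' := by
    rw [← SimpleGraph.sdiff_edge _ hnadj, ← sup_sdiff_right_self, h, sup_sdiff_right_self,
      SimpleGraph.sdiff_edge _ hnadj']
  obtain rfl : i = i' := le_antisymm (hL'.le_of_sup_eq_sup hR' hij'.lt hai' hL hai hLR.symm)
    (hL.le_of_sup_eq_sup hR hij.lt hai hL' hai' hLR)
  obtain rfl : j = j' := hij.unique_right hij'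
  refine ⟨rfl, eq_and_eq_of_sup_eq_sup ?_ hL.support_subset hL'.support_subset hR.support_subset
    hR'.support_subset hLR⟩
  exact fun x hx => absurd (hx.1.2.trans_lt hij.lt) hx.2.1.not_gt

end IsNoncrossingTree

theorem isNoncrossingTree_self_iff : IsNoncrossingTree G a a ↔ G = ⊥ := by
  constructor
  · intro hG
    refine (SimpleGraph.support_eq_bot_iff _).1 (Set.eq_empty_of_forall_notMem ?_)
    rintro x ⟨y, hxy⟩
    have hx := hG.support_subset hxy.mem_support_left
    have hy := hG.support_subset hxy.mem_support_right
    rw [Set.Icc_self] at hx hy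
    exact hxy.ne (hx.trans hy.symm)
  · rintro rfl
    exact ⟨SimpleGraph.isAcyclic_bot, fun _ _ _ _ h => h.elim, by simp, by simp⟩

section Counting

open Finset

variable [Fintype α]

/-- The noncrossing trees on the vertices `[a, b]`. -/
noncomputable def noncrossingTrees (a b : α) : Finset (SimpleGraph α) :=
  (Set.toFinite {G | IsNoncrossingTree G a b}).toFinset

/-- The noncrossing trees on the vertices `[a, b]` that contain the boundary edge `ab`. -/
noncomputable def closedNoncrossingTrees (a b : α) : Finset (SimpleGraph α) :=
  (Set.toFinite {G | IsNoncrossingTree G a b ∧ G.Adj a b}).toFinset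

theorem mem_noncrossingTrees : G ∈ noncrossingTrees a b ↔ IsNoncrossingTree G a b :=
  Set.Finite.mem_toFinset _

theorem mem_closedNoncrossingTrees :
    G ∈ closedNoncrossingTrees a b ↔ IsNoncrossingTree G a b ∧ G.Adj a b :=
  Set.Finite.mem_toFinset _

theorem card_noncrossingTrees_self (a : α) : #(noncrossingTrees a a) = 1 :=
  card_eq_one.2 ⟨⊥, by ext; simp [mem_noncrossingTrees, isNoncrossingTree_self_iff]⟩

variable [LocallyFiniteOrder α]

theorem card_noncrossingTrees_of_lt (hab : a < b) :
    #(noncrossingTrees a b) =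
      ∑ v ∈ Ioc a b, #(closedNoncrossingTrees a v) * #(noncrossingTrees v b) := by
  refine card_eq_sum_card_mul_card (· ⊔ ·) ?_ ?_ ?_ <;>
    simp only [mem_closedNoncrossingTrees, mem_noncrossingTrees, mem_Ioc]
  · exact fun v hv L hL R hR => hL.1.sup hR hv.1.le hv.2
  · exact fun v _ L hL R hR v' _ L' hL' R' hR' h =>
      hL.1.sup_inj hL.2 hR hL'.1 hL'.2 hR' h
  · intro G hG
    obtain ⟨v, hv, L, R, hL, hLv, hR, rfl⟩ := hG.exists_sup_eq hab
    exact ⟨v, hv, L, ⟨hL, hLv⟩, R, hR, rfl⟩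

theorem card_closedNoncrossingTrees_of_lt [PredOrder α] (hab : a < b) :
    #(closedNoncrossingTrees a b) =
      ∑ j ∈ Ioc a b, #(noncrossingTrees a (Order.pred j)) * #(noncrossingTrees j b) := by
  have hle_pred : ∀ {j}, a < j → a ≤ Order.pred j := Order.le_pred_of_lt
  have hcovBy : ∀ {j}, a < j → Order.pred j ⋖ j := fun h =>
    Order.pred_covBy_of_not_isMin h.not_isMin
  refine card_eq_sum_card_mul_card (· ⊔ · ⊔ SimpleGraph.edge a b) ?_ ?_ ?_ <;>
    simp only [mem_closedNoncrossingTrees, mem_noncrossingTrees, mem_Ioc]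
  · exact fun j hj L hL R hR => ⟨hL.sup_sup_edge hR (hcovBy hj.1) (hle_pred hj.1) hj.2,
      .inr ((SimpleGraph.edge_adj ..).2 ⟨.inl ⟨rfl, rfl⟩, hab.ne⟩)⟩
  · exact fun j hj L hL R hR j' hj' L' hL' R' hR' h => hL.sup_sup_edge_inj (hle_pred hj.1)
      (hcovBy hj.1) hj.2 hR (hle_pred hj'.1) (hcovBy hj'.1) hj'.2 hL' hR' h
  · rintro G ⟨hG, hadj⟩
    obtain ⟨i, j, hai, hij, hjb, L, R, hL, hR, rfl⟩ := hG.exists_sup_sup_edge_eq hadj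
    obtain rfl := hij.pred_eq
    exact ⟨j, ⟨hai.trans_lt hij.lt, hjb⟩, L, hL, R, hR, rfl⟩

end Counting

end LinearOrder

theorem coeff_pow_of_eq_one_add_X_mul_pow {p : ℕ} {T : PowerSeries ℕ}
    (hT : T = 1 + PowerSeries.X * T ^ (p + 1)) (n r : ℕ) :
    ((p + 1) * n + r) * (T ^ r).coeff n = r * ((p + 1) * n + r).choose n := by
  induction n generalizing r with
  | zero =>
    have hT0 : T.constantCoeff = 1 := by rw [hT]; simp
    simp [hT0]
  | succ n ihn =>
    induction r with
    | zero => simp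
    | succ r ihr =>
      have hpow : T ^ (r + 1) = T ^ r + PowerSeries.X * T ^ (p + 1 + r) := by
        calc T ^ (r + 1) = T ^ r * (1 + PowerSeries.X * T ^ (p + 1)) := by rw [pow_succ, ← hT]
          _ = T ^ r + PowerSeries.X * T ^ (p + 1 + r) := by ring
      have hcoeff : (T ^ (r + 1)).coeff (n + 1) =
          (T ^ r).coeff (n + 1) + (T ^ (p + 1 + r)).coeff n := by
        rw [hpow, map_add, PowerSeries.coeff_succ_X_mul]
      have hpascal : ((p + 1) * (n + 1) + (r + 1)).choose (n + 1) =
          ((p + 1) * (n + 1) + r).choose n + ((p + 1) * (n + 1) + r).choose (n + 1) := rfl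
      have habsorb := Nat.add_one_mul_choose_eq ((p + 1) * (n + 1) + r) n
      have ihn' := ihn (p + 1 + r)
      rw [show (p + 1) * n + (p + 1 + r) = (p + 1) * (n + 1) + r by ring] at ihn'
      rw [add_assoc, hpascal] at habsorb
      refine Nat.eq_of_mul_eq_mul_left (show 0 < (p + 1) * (n + 1) + r by positivity) ?_
      rw [hcoeff, hpascal]
      linear_combination ((p + 1) * (n + 1) + r + 1) * (ihr + ihn') + (p + 1) * habsorb

/-- The ternary Fuss–Catalan numbers `1, 1, 3, 12, 55, …`, counting ternary trees by their inner
nodes, defined through the recursion that noncrossing trees satisfy. The sums run over `Fin` for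
the sake of the termination check. -/
def ternaryCatalan : ℕ → ℕ
  | 0 => 1
  | n + 1 => ∑ i : Fin (n + 1),
      (∑ j : Fin (i + 1), ternaryCatalan j * ternaryCatalan (i - j)) * ternaryCatalan (n - i)
decreasing_by all_goals omega

open Finset in
theorem ternaryCatalan_succ (n : ℕ) : ternaryCatalan (n + 1) = ∑ p ∈ antidiagonal n,
    (∑ q ∈ antidiagonal p.1, ternaryCatalan q.1 * ternaryCatalan q.2) * ternaryCatalan p.2 := by
  rw [ternaryCatalan, Nat.sum_antidiagonal_eq_sum_range_succ_mk, sum_range]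
  simp only [Nat.sum_antidiagonal_eq_sum_range_succ_mk, sum_range]

theorem mk_ternaryCatalan_eq_one_add_X_mul_pow : PowerSeries.mk ternaryCatalan =
    1 + PowerSeries.X * PowerSeries.mk ternaryCatalan ^ 3 := by
  ext (_ | n)
  · simp [ternaryCatalan]
  · rw [map_add, PowerSeries.coeff_succ_X_mul, pow_succ, sq]
    simp [PowerSeries.coeff_mul, ternaryCatalan_succ, PowerSeries.coeff_one]

theorem two_mul_add_one_mul_ternaryCatalan (n : ℕ) :
    (2 * n + 1) * ternaryCatalan n = (3 * n).choose n := by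
  have h := coeff_pow_of_eq_one_add_X_mul_pow mk_ternaryCatalan_eq_one_add_X_mul_pow n 1
  have hchoose := Nat.choose_mul_succ_eq (3 * n) n
  rw [pow_one, PowerSeries.coeff_mk, one_mul] at h
  rw [show 3 * n + 1 - n = 2 * n + 1 by omega, ← h] at hchoose
  refine Nat.eq_of_mul_eq_mul_right (Nat.succ_pos (3 * n)) ?_
  calc (2 * n + 1) * ternaryCatalan n * (3 * n + 1)
      _ = (3 * n + 1) * ternaryCatalan n * (2 * n + 1) := by ring
      _ = (3 * n).choose n * (3 * n + 1) := hchoose.symm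

open Finset in
theorem sum_Ioc_eq_sum_antidiagonal {M : Type*} [AddCommMonoid M] {n m : ℕ} {a b : Fin n}
    (hab : (b : ℕ) = a + m + 1) {F : Fin n → M} {f : ℕ × ℕ → M}
    (h : ∀ (v : Fin n) (p q : ℕ), (v : ℕ) = a + p + 1 → (b : ℕ) = v + q → F v = f (p, q)) :
    ∑ v ∈ Ioc a b, F v = ∑ p ∈ antidiagonal m, f p := by
  refine sum_nbij (fun v => (v - (a + 1), b - v)) ?_ ?_ ?_ ?_
  · intro v hv
    rw [mem_Ioc] at hv
    rw [HasAntidiagonal.mem_antidiagonal]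
    omega
  · intro v hv w hw hvw
    rw [mem_coe, mem_Ioc] at hv hw
    rw [Prod.mk.injEq] at hvw
    omega
  · rintro ⟨p, q⟩ hpq
    have hpq' : p + q = m := by simpa using hpq
    refine ⟨⟨a + p + 1, by omega⟩, ?_, ?_⟩
    · rw [mem_coe, mem_Ioc, Fin.lt_def, Fin.le_def]
      dsimp only
      omega
    · rw [Prod.mk.injEq]
      dsimp only
      omega
  · intro v hv
    rw [mem_Ioc] at hv
    exact h v _ _ (by omega) (by omega)

section Fin

open Finset

theorem card_noncrossingTrees_eq_ternaryCatalan {n m : ℕ} {a b : Fin (n + 1)}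
    (hab : (b : ℕ) = a + m) : #(noncrossingTrees a b) = ternaryCatalan m := by
  induction m using Nat.strong_induction_on generalizing a b with
  | _ m ih =>
    obtain _ | m := m
    · obtain rfl : a = b := Fin.ext hab.symm
      rw [card_noncrossingTrees_self, ternaryCatalan]
    · have hclosed : ∀ (v : Fin (n + 1)) (k : ℕ), k ≤ m → (v : ℕ) = a + k + 1 →
          #(closedNoncrossingTrees a v) =
            ∑ q ∈ antidiagonal k, ternaryCatalan q.1 * ternaryCatalan q.2 := by
        intro v k hk hv
        rw [card_closedNoncrossingTrees_of_lt (by omega : a < v)]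
        refine sum_Ioc_eq_sum_antidiagonal hv fun j p q hj hq => ?_
        have hpred : ((Order.pred j : Fin (n + 1)) : ℕ) + 1 = j := Nat.covBy_iff_add_one_eq.1
          (Fin.covBy_iff.1 (Order.pred_covBy_of_not_isMin (by omega : a < j).not_isMin))
        rw [ih p (by omega) (by omega), ih q (by omega) hq]
      rw [card_noncrossingTrees_of_lt (by omega : a < b), ternaryCatalan_succ]
      refine sum_Ioc_eq_sum_antidiagonal hab fun v p q hv hq => ?_
      rw [hclosed v p (by omega) hv, ih q (by omega) hq]

end Fin

section Dissection

variable {n : ℕ}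

theorem isTree_iff_isAcyclic_and_card {V : Type*} [Finite V] {G : SimpleGraph V} :
    G.IsTree ↔ G.IsAcyclic ∧ Nat.card G.edgeSet + 1 = Nat.card V := by
  refine ⟨fun h => ⟨h.isAcyclic, (SimpleGraph.isTree_iff_connected_and_card.1 h).2⟩, ?_⟩
  rintro ⟨hG, hcard⟩
  have : Nonempty V := (Nat.card_pos_iff.1 (hcard ▸ Nat.succ_pos _)).1
  obtain ⟨T, hGT, -, hT⟩ := SimpleGraph.connected_top.exists_isTree_le_of_le_of_isAcyclic le_top hG
  have hTcard := (SimpleGraph.isTree_iff_connected_and_card.1 hT).2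
  have hle : Nat.card T.edgeSet ≤ Nat.card G.edgeSet := by omega
  rwa [SimpleGraph.edgeSet_inj.1
    (Set.eq_of_subset_of_ncard_le (SimpleGraph.edgeSet_mono hGT) hle)]

theorem isNoncrossing_fromEdgeSet_iff {m : ℕ} {C : Finset (Sym2 (Fin m))} :
    IsNoncrossing (SimpleGraph.fromEdgeSet (C : Set (Sym2 (Fin m)))) ↔
      ∀ e₁ ∈ C, ∀ e₂ ∈ C, ¬ Crosses e₁ e₂ := by
  simp only [IsNoncrossing, SimpleGraph.fromEdgeSet_adj, Finset.mem_coe]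
  constructor
  · rintro h _ he₁ _ he₂ ⟨a, b, c, d, rfl, rfl, ⟨hac, hcb, hbd⟩ | ⟨hca, had, hdb⟩⟩
    · exact (h ⟨he₁, (hac.trans hcb).ne⟩ ⟨he₂, (hcb.trans hbd).ne⟩ hac hcb).not_gt hbd
    · exact (h ⟨he₂, (hca.trans had).ne⟩ ⟨he₁, (had.trans hdb).ne⟩ hca had).not_gt hdb
  · intro h x y z w hxy hzw hxz hzy
    by_contra! hyw
    exact h _ hxy.1 _ hzw.1 ⟨x, y, z, w, rfl, rfl, .inl ⟨hxz, hzy, hyw⟩⟩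

theorem isNoncrossingTree_zero_last_iff {G : SimpleGraph (Fin (n + 1))} :
    IsNoncrossingTree G 0 (Fin.last n) ↔ IsNoncrossing G ∧ G.IsTree := by
  have hIcc : ∀ x, x ∈ Set.Icc 0 (Fin.last n) := fun x => ⟨Fin.zero_le x, Fin.le_last x⟩
  refine ⟨fun h => ⟨h.isNoncrossing, ?_, h.isAcyclic⟩, fun ⟨hnc, htree⟩ =>
    ⟨htree.isAcyclic, hnc, fun x _ => hIcc x, fun x _ => htree.connected 0 x⟩⟩
  exact (SimpleGraph.connected_iff_exists_forall_reachable G).2 ⟨0, fun x => h.reachable x (hIcc x)⟩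

theorem edgeSet_fromEdgeSet_of_forall_not_isDiag {V : Type*} {s : Set (Sym2 V)}
    (hs : ∀ e ∈ s, ¬ e.IsDiag) : (SimpleGraph.fromEdgeSet s).edgeSet = s :=
  (SimpleGraph.edgeSet_eq_iff _ _).2 ⟨rfl, Set.disjoint_left.2 hs⟩

theorem isDissection_iff {C : Finset (Sym2 (Fin (n + 1)))} :
    IsDissection C ↔ (∀ e ∈ C, ¬ e.IsDiag) ∧
      IsNoncrossingTree (SimpleGraph.fromEdgeSet (C : Set (Sym2 (Fin (n + 1))))) 0
        (Fin.last n) := by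
  rw [IsDissection, isNoncrossingTree_zero_last_iff, isNoncrossing_fromEdgeSet_iff,
    isTree_iff_isAcyclic_and_card, Nat.card_fin, Nat.add_right_cancel_iff, and_left_comm]
  refine and_congr_right fun hdiag => ?_
  rw [edgeSet_fromEdgeSet_of_forall_not_isDiag hdiag, Nat.card_coe_set_eq, Set.ncard_coe_finset,
    and_comm, and_assoc]

theorem numDissection_eq_card_noncrossingTrees :
    numDissection n = (noncrossingTrees 0 (Fin.last n)).card := by
  rw [numDissection, ← Nat.card_eq_finsetCard]
  let toGraph (C : {C : Finset (Sym2 (Fin (n + 1))) // IsDissection C}) :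
      noncrossingTrees 0 (Fin.last n) :=
    ⟨SimpleGraph.fromEdgeSet C.1, mem_noncrossingTrees.2 (isDissection_iff.1 C.2).2⟩
  refine Nat.card_eq_of_bijective toGraph ⟨fun C C' h => ?_, fun ⟨G, hG⟩ => ?_⟩
  · have hedge := congrArg SimpleGraph.edgeSet (Subtype.ext_iff.1 h)
    rw [edgeSet_fromEdgeSet_of_forall_not_isDiag (isDissection_iff.1 C.2).1,
      edgeSet_fromEdgeSet_of_forall_not_isDiag (isDissection_iff.1 C'.2).1] at hedge
    exact Subtype.ext (Finset.coe_injective hedge)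
  · have hcoe : (G.edgeSet.toFinite.toFinset : Set (Sym2 (Fin (n + 1)))) = G.edgeSet :=
      Set.Finite.coe_toFinset _
    refine ⟨⟨G.edgeSet.toFinite.toFinset, isDissection_iff.2 ⟨fun e he => ?_, ?_⟩⟩, ?_⟩
    · exact G.not_isDiag_of_mem_edgeSet ((Set.Finite.mem_toFinset _).1 he)
    · rw [hcoe, SimpleGraph.fromEdgeSet_edgeSet]
      exact mem_noncrossingTrees.1 hG
    · exact Subtype.ext (by simp only [toGraph, hcoe, SimpleGraph.fromEdgeSet_edgeSet])

end Dissection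

/-- the number of dissection diagrams of degree `n` equals
`(1/(2n+1))·choose (3n) n`, i.e. `(2n+1)` times this number is `choose (3n) n`. -/
theorem numDissection_eq_fussCatalan (n : ℕ) :
    (2 * n + 1) * numDissection n = (3 * n).choose n := by
  rw [numDissection_eq_card_noncrossingTrees,
    card_noncrossingTrees_eq_ternaryCatalan (m := n) (by simp),
    two_mul_add_one_mul_ternaryCatalan]
end

section
/- For every n ∈ ℕ, the integer 2n+1 divides the binomial coefficient binomial(3n, n). -/
theorem add_one_dvd_choose_add_of_coprime {m n : ℕ} (h : Nat.Coprime (m + 1) n) :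
    m + 1 ∣ (m + n).choose n := by
  have absorption : (m + n).choose (m + 1) * (m + 1) = (m + n).choose n * n := by
    rw [Nat.choose_succ_right_eq, Nat.add_sub_cancel_left, Nat.choose_symm_add]
  exact h.dvd_of_dvd_mul_right (Dvd.intro_left _ absorption)

theorem two_n_add_one_dvd_choose_general (k n : ℕ) : k * n + 1 ∣ ((k + 1) * n).choose n := by
  have coprime : Nat.Coprime (k * n + 1) n := by simp
  simpa only [add_one_mul] using add_one_dvd_choose_add_of_coprime coprime

/-- for every `n`, `2n+1` divides the binomial coefficient `choose (3n) n`. -/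
theorem two_n_add_one_dvd_choose (n : ℕ) : (2 * n + 1) ∣ (3 * n).choose n :=
  two_n_add_one_dvd_choose_general 2 n
end

section
/- For every integer n ≥ 2, one has (2n+1)·Catalan(n) < binomial(3n, n); that is, the n-th Catalan number is strictly smaller than the number (1/(2n+1))·binomial(3n,n) of dissection diagrams of degree n, so for n ≥ 2 there are strictly fewer rooted forests of degree n (which are at most Catalan(n) in number) than dissection diagrams of degree n. -/
theorem two_mul_add_one_mul_catalan (n : ℕ) :
    (2 * n + 1) * catalan n = (2 * n + 1).choose n := by
  refine Nat.eq_of_mul_eq_mul_left n.succ_pos ?_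
  calc (n + 1) * ((2 * n + 1) * catalan n)
      = (2 * n + 1) * (2 * n).choose n := by
        rw [mul_left_comm, succ_mul_catalan_eq_centralBinom, Nat.centralBinom_eq_two_mul_choose]
    _ = (2 * n + 1).choose (n + 1) * (n + 1) := Nat.add_one_mul_choose_eq (2 * n) n
    _ = (n + 1) * (2 * n + 1).choose n := by rw [Nat.choose_symm_half, mul_comm]

theorem choose_lt_succ {n k : ℕ} (hk : k ≠ 0) (hkn : k ≤ n + 1) :
    n.choose k < (n + 1).choose k := by
  obtain ⟨k, rfl⟩ := Nat.exists_eq_succ_of_ne_zero hk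
  rw [Nat.choose_succ_succ]
  exact Nat.lt_add_of_pos_left (Nat.choose_pos (Nat.le_of_succ_le_succ hkn))

theorem choose_lt_choose {m n k : ℕ} (hk : k ≠ 0) (hkn : k ≤ n) (hmn : m < n) :
    m.choose k < n.choose k := by
  obtain ⟨n, rfl⟩ := Nat.exists_eq_succ_of_ne_zero (Nat.ne_zero_of_lt hmn)
  exact (Nat.choose_le_choose k (Nat.le_of_lt_succ hmn)).trans_lt (choose_lt_succ hk hkn)

/-- for every `n ≥ 2`, `(2n+1)·Catalan(n) < choose (3n) n`;
i.e. the `n`-th Catalan number is strictly smaller than the number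
`(1/(2n+1))·choose (3n) n` of dissection diagrams of degree `n`. -/
theorem catalan_lt_fussCatalan (n : ℕ) (hn : 2 ≤ n) :
    (2 * n + 1) * catalan n < (3 * n).choose n := by
  rw [two_mul_add_one_mul_catalan]
  exact choose_lt_choose (by lia) (by lia) (by lia)
end
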